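/- For any two unit vectors φ₀, φ₁ in a complex Hilbert space, the supremum over unit vectors ξ of |⟨φ₀, ξ⟩|² + |⟨φ₁, ξ⟩|² equals 1 + |⟨φ₀, φ₁⟩|. -/

import Mathlib

/-!
Upper bound: for a unit vector `ξ` put `a = ⟪φ₀, ξ⟫`, `b = ⟪φ₁, ξ⟫`, `S = |a|² + |b|²` and
`v = a φ₀ + b φ₁`. Then `⟪v, ξ⟫ = S`, so Cauchy–Schwarz gives `S ≤ ‖v‖`, while expanding the square
gives `‖v‖² ≤ S + 2 |a| |b| |⟪φ₀, φ₁⟫| ≤ S (1 + |⟪φ₀, φ₁⟫|)`.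

Attainment: choose a phase `u` with `⟪φ₀, u φ₁⟫ = |⟪φ₀, φ₁⟫|`. The normalization of `φ₀ + u φ₁`
attains the bound.
-/

open scoped InnerProductSpace

lemma inner_sq_add_le {E : Type*} [NormedAddCommGroup E] [InnerProductSpace ℂ E]
    (φ₀ φ₁ ξ : E) (h₀ : ‖φ₀‖ = 1) (h₁ : ‖φ₁‖ = 1) (hξ : ‖ξ‖ = 1) :
    ‖⟪φ₀, ξ⟫_ℂ‖ ^ 2 + ‖⟪φ₁, ξ⟫_ℂ‖ ^ 2 ≤ 1 + ‖⟪φ₀, φ₁⟫_ℂ‖ := by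
  set a := ⟪φ₀, ξ⟫_ℂ with ha
  set b := ⟪φ₁, ξ⟫_ℂ with hb
  set c := ‖⟪φ₀, φ₁⟫_ℂ‖ with hc
  have hc0 : 0 ≤ c := norm_nonneg _
  have hvξ : ⟪a • φ₀ + b • φ₁, ξ⟫_ℂ = ((‖a‖ ^ 2 + ‖b‖ ^ 2 : ℝ) : ℂ) := by
    rw [inner_add_left, inner_smul_left, inner_smul_left, ← ha, ← hb,
      RCLike.conj_mul, RCLike.conj_mul]
    push_cast
    rfl
  have hS : ‖a‖ ^ 2 + ‖b‖ ^ 2 ≤ ‖a • φ₀ + b • φ₁‖ := by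
    have h := norm_inner_le_norm (𝕜 := ℂ) (a • φ₀ + b • φ₁) ξ
    rw [hvξ, hξ, mul_one, Complex.norm_real, Real.norm_of_nonneg (by positivity)] at h
    exact h
  have hv : ‖a • φ₀ + b • φ₁‖ ^ 2 ≤ ‖a‖ ^ 2 + ‖b‖ ^ 2 + 2 * (‖a‖ * ‖b‖ * c) := by
    have hre : RCLike.re ⟪a • φ₀, b • φ₁⟫_ℂ ≤ ‖a‖ * ‖b‖ * c := by
      refine (RCLike.re_le_norm _).trans (le_of_eq ?_)
      rw [inner_smul_left, inner_smul_right, norm_mul, norm_mul, RCLike.norm_conj, mul_assoc]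
    rw [norm_add_sq (𝕜 := ℂ), norm_smul, norm_smul, h₀, h₁, mul_one, mul_one]
    linarith
  have hab : 2 * (‖a‖ * ‖b‖ * c) ≤ (‖a‖ ^ 2 + ‖b‖ ^ 2) * c := by
    nlinarith [mul_nonneg hc0 (sq_nonneg (‖a‖ - ‖b‖))]
  have hS0 : 0 ≤ ‖a‖ ^ 2 + ‖b‖ ^ 2 := by positivity
  have hSS := pow_le_pow_left₀ hS0 hS 2
  rcases hS0.eq_or_lt with h | h
  · linarith
  · refine le_of_mul_le_mul_left ?_ h
    nlinarith

lemma exists_inner_sq_add_eq {E : Type*} [NormedAddCommGroup E] [InnerProductSpace ℂ E]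
    (φ₀ φ₁ : E) (h₀ : ‖φ₀‖ = 1) (h₁ : ‖φ₁‖ = 1) :
    ∃ ξ : E, ‖ξ‖ = 1 ∧
      1 + ‖⟪φ₀, φ₁⟫_ℂ‖ = ‖⟪φ₀, ξ⟫_ℂ‖ ^ 2 + ‖⟪φ₁, ξ⟫_ℂ‖ ^ 2 := by
  obtain ⟨u, hu, huc⟩ := RCLike.exists_norm_eq_mul_self ⟪φ₀, φ₁⟫_ℂ
  set c := ‖⟪φ₀, φ₁⟫_ℂ‖ with hc
  have hc0 : 0 ≤ c := norm_nonneg _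
  have hψ : ‖u • φ₁‖ = 1 := by rw [norm_smul, hu, h₁, mul_one]
  have h01 : ⟪φ₀, u • φ₁⟫_ℂ = (c : ℂ) := by rw [inner_smul_right]; exact huc.symm
  have h10 : ⟪u • φ₁, φ₀⟫_ℂ = (c : ℂ) := by
    rw [← inner_conj_symm, h01, Complex.conj_ofReal]
  set w := φ₀ + u • φ₁ with hw
  have hnorm : ‖((1 + c : ℝ) : ℂ)‖ = 1 + c := by
    rw [Complex.norm_real, Real.norm_of_nonneg (by positivity)]
  have hw0 : ‖⟪φ₀, w⟫_ℂ‖ = 1 + c := by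
    rw [hw, inner_add_right, h01, inner_self_eq_norm_sq_to_K, h₀, ← hnorm]
    simp
  have hw1 : ‖⟪φ₁, w⟫_ℂ‖ = 1 + c := by
    have h : ‖⟪u • φ₁, w⟫_ℂ‖ = 1 + c := by
      rw [hw, inner_add_right, h10, inner_self_eq_norm_sq_to_K, hψ, ← hnorm]
      simp [add_comm]
    rwa [inner_smul_left, norm_mul, RCLike.norm_conj, hu, one_mul] at h
  have hww : ‖w‖ ^ 2 = 2 * (1 + c) := by
    rw [hw, norm_add_sq (𝕜 := ℂ), h01, h₀, hψ]
    simp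
    ring
  have hwpos : ‖w‖ ≠ 0 := by
    intro h
    rw [h] at hww
    nlinarith
  refine ⟨((‖w‖⁻¹ : ℝ) : ℂ) • w, ?_, ?_⟩
  · rw [norm_smul, Complex.norm_real, norm_inv, norm_norm, inv_mul_cancel₀ hwpos]
  · rw [inner_smul_right, inner_smul_right, norm_mul, norm_mul, hw0, hw1, Complex.norm_real,
      norm_inv, norm_norm, mul_pow, inv_pow, hww]
    have : 1 + c ≠ 0 := by positivity
    field_simp
    ring

theorem sSup_inner_sq {E : Type*} [NormedAddCommGroup E] [InnerProductSpace ℂ E]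
    [FiniteDimensional ℂ E] (φ₀ φ₁ : E) (h₀ : ‖φ₀‖ = 1) (h₁ : ‖φ₁‖ = 1) :
    sSup {r : ℝ | ∃ ξ : E, ‖ξ‖ = 1 ∧ r = ‖⟪φ₀, ξ⟫_ℂ‖ ^ 2 + ‖⟪φ₁, ξ⟫_ℂ‖ ^ 2}
      = 1 + ‖⟪φ₀, φ₁⟫_ℂ‖ := by
  refine IsGreatest.csSup_eq ⟨exists_inner_sq_add_eq φ₀ φ₁ h₀ h₁, ?_⟩
  rintro r ⟨ξ, hξ, rfl⟩
  exact inner_sq_add_le φ₀ φ₁ ξ h₀ h₁ hξ
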